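/- Let t = 10 and let a_i, b_i, c_i (1 ≤ i ≤ 10) be positive integers, and let G = G(a,b,c) be the corresponding subdivision of K_{3,10}, which has n = (Σ_{i=1}^{10}(a_i+b_i+c_i)) − 17 vertices. Then for every natural number x ≥ 4, the number of x-colorings satisfies π(G,x) < (x)↓4·(x−1)^(n−4). -/

import Mathlib

/-!
Write `q = x - 1` and condition on the colours of the three hubs.  Given these, the ten spokes
together with their paths are coloured independently, so `π(G, x)` is at most a sum over hub
colours of a product of ten sums over a spoke colour (`chromPoly_le`).

The number of colourings of the interior of a path with `m + 1` edges depends only on whether its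
end colours `s`, `t` agree: it is bounded by `q ^ m` times a number `l ∈ [0, 1]` if `s = t` and
`1 - l / q` if `s ≠ t` (`exists_wt`).  Thus every path interpolates linearly between a path with
one edge (`l = 0`) and a path with two edges (`l = 1`).  After division by the powers of `q`, the
contribution of one spoke is affine in each of its three parameters, hence it is largest at a
vertex of the unit cube (`triaffine_le`).  The maximum over the eight vertices is at most
* `q` when the three hub colours coincide,
* `(q² - q + 1) / q` when exactly two of them coincide,
* `(q - 1)(q² - q + 2) / q²` when they are distinct
(`spoke_le`).  Taking tenth powers and summing over hub colours (`sum_bd`) reduces the theorem to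
an inequality in `q ≥ 3` alone (`final_ineq`), in which, after substituting `q = k + 3` and
clearing denominators, all coefficients are nonnegative.
-/

open SimpleGraph Finset

/-- `chromPoly G x` is the number of proper `x`-colorings of the graph `G`,
i.e. the value `π(G,x)` of the chromatic polynomial at `x`. -/
noncomputable def chromPoly {V : Type} (G : SimpleGraph V) (x : ℕ) : ℕ :=
  Nat.card {f : V → Fin x // ∀ ⦃u v : V⦄, G.Adj u v → f u ≠ f v}

/-- Relation generating the subdivision of `K_{3,t}`: the three hubs are `Sum.inl 0`,
`Sum.inl 1`, `Sum.inl 2`, the spokes are `Sum.inr (Sum.inl i)` for `i : Fin t`, and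
for each `i` the edge from hub `0` (resp. `1`, `2`) to spoke `i` is replaced by an
internally disjoint path with `a i` (resp. `b i`, `c i`) edges, whose internal
vertices form the corresponding block of the sigma type. -/
def k3tRel (t : ℕ) (a b c : Fin t → ℕ) :
    (Fin 3 ⊕ Fin t ⊕ (Σ i : Fin t, (Fin (a i - 1) ⊕ Fin (b i - 1) ⊕ Fin (c i - 1)))) →
    (Fin 3 ⊕ Fin t ⊕ (Σ i : Fin t, (Fin (a i - 1) ⊕ Fin (b i - 1) ⊕ Fin (c i - 1)))) → Prop
  | Sum.inl k, Sum.inr (Sum.inl i) =>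
      (k = 0 ∧ a i = 1) ∨ (k = 1 ∧ b i = 1) ∨ (k = 2 ∧ c i = 1)
  | Sum.inl k, Sum.inr (Sum.inr ⟨_, Sum.inl j⟩) => k = 0 ∧ (j:ℕ) = 0
  | Sum.inl k, Sum.inr (Sum.inr ⟨_, Sum.inr (Sum.inl j)⟩) => k = 1 ∧ (j:ℕ) = 0
  | Sum.inl k, Sum.inr (Sum.inr ⟨_, Sum.inr (Sum.inr j)⟩) => k = 2 ∧ (j:ℕ) = 0
  | Sum.inr (Sum.inl i), Sum.inr (Sum.inr ⟨i', Sum.inl j⟩) => i = i' ∧ (j:ℕ) = a i' - 2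
  | Sum.inr (Sum.inl i), Sum.inr (Sum.inr ⟨i', Sum.inr (Sum.inl j)⟩) => i = i' ∧ (j:ℕ) = b i' - 2
  | Sum.inr (Sum.inl i), Sum.inr (Sum.inr ⟨i', Sum.inr (Sum.inr j)⟩) => i = i' ∧ (j:ℕ) = c i' - 2
  | Sum.inr (Sum.inr ⟨i, Sum.inl j⟩), Sum.inr (Sum.inr ⟨i', Sum.inl j'⟩) =>
      i = i' ∧ (j':ℕ) = (j:ℕ) + 1
  | Sum.inr (Sum.inr ⟨i, Sum.inr (Sum.inl j)⟩), Sum.inr (Sum.inr ⟨i', Sum.inr (Sum.inl j')⟩) =>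
      i = i' ∧ (j':ℕ) = (j:ℕ) + 1
  | Sum.inr (Sum.inr ⟨i, Sum.inr (Sum.inr j)⟩), Sum.inr (Sum.inr ⟨i', Sum.inr (Sum.inr j')⟩) =>
      i = i' ∧ (j':ℕ) = (j:ℕ) + 1
  | _, _ => False

/-- The subdivision `G(a,b,c)` of `K_{3,t}` with bipartition hubs `{u₁,u₂,u₃}` and
spokes `{v₁,…,v_t}` in which, for each `i`, the edge `u₁vᵢ` is replaced by a path
with `a i` edges, `u₂vᵢ` by a path with `b i` edges and `u₃vᵢ` by a path with
`c i` edges, all `3t` paths being internally disjoint.  It has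
`(∑ i, (a i + b i + c i)) - 2t + 3` vertices. -/
def k3tGraph (t : ℕ) (a b c : Fin t → ℕ) :
    SimpleGraph (Fin 3 ⊕ Fin t ⊕ (Σ i : Fin t, (Fin (a i - 1) ⊕ Fin (b i - 1) ⊕ Fin (c i - 1)))) :=
  SimpleGraph.fromRel (k3tRel t a b c)

/-! ### Colourings of a single path -/

namespace K3t

/-- `IsPath s t m f` says that `f` properly colours the `m` internal vertices of a path with
`m + 1` edges whose end vertices have colours `s` and `t`. -/
def IsPath {X : Type} (s t : X) (m : ℕ) (f : Fin m → X) : Prop :=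
  (m = 0 → s ≠ t) ∧ (∀ j : Fin m, (j : ℕ) = 0 → s ≠ f j) ∧
    (∀ j : Fin m, (j : ℕ) + 1 = m → t ≠ f j) ∧
    ∀ j j' : Fin m, (j' : ℕ) = j + 1 → f j ≠ f j'

/-- The type of proper colourings of the interior of a path with end colours `s` and `t`. -/
abbrev PathCol (x : ℕ) (s t : Fin x) (m : ℕ) : Type := {f : Fin m → Fin x // IsPath s t m f}

noncomputable instance (x : ℕ) (s t : Fin x) (m : ℕ) : Fintype (PathCol x s t m) :=
  Fintype.ofFinite _

/-- The normalised number of colourings of the interior of a path between end colours `s` and `t`: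
for a path with `m + 1` edges and a suitable `l ∈ [0, 1]`, the actual number is bounded by
`q ^ m * wt q l s t`. -/
noncomputable def wt {x : ℕ} (q l : ℝ) (s t : Fin x) : ℝ := if s = t then l else 1 - l / q

/-- Condition on the colour `r` of the first internal vertex. -/
lemma card_step (x : ℕ) (s t : Fin x) (m : ℕ) :
    Fintype.card (PathCol x s t (m + 1)) ≤
      ∑ r : Fin x, if s = r then 0 else Fintype.card (PathCol x r t m) := by
  classical
  have h1 : (∑ r : Fin x, if s = r then 0 else Fintype.card (PathCol x r t m)) =
      Fintype.card (Σ r : {r : Fin x // s ≠ r}, PathCol x r.1 t m) := by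
    rw [Fintype.card_sigma, ← Finset.sum_subtype (Finset.univ.filter (s ≠ ·)) (by simp)
      (fun r => Fintype.card (PathCol x r t m)), Finset.sum_filter]
    simp only [ne_eq, ite_not]
  rw [h1]
  let e : PathCol x s t (m + 1) → Σ r : {r : Fin x // s ≠ r}, PathCol x r.1 t m := fun f =>
    ⟨⟨f.1 0, f.2.2.1 0 rfl⟩, ⟨fun j => f.1 j.succ, by
      obtain ⟨f, h0, h1, h2, h3⟩ := f
      refine ⟨fun hm => ?_, fun j hj => ?_, fun j hj => ?_, fun j j' hj => ?_⟩
      · exact (h2 0 (by simp [hm])).symm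
      · exact h3 _ _ (by simp [hj])
      · exact h2 _ (by simp [hj])
      · exact h3 _ _ (by simp [hj])⟩⟩
  let g : (Σ r : {r : Fin x // s ≠ r}, PathCol x r.1 t m) → (Fin (m + 1) → Fin x) := fun p =>
    Fin.cons p.1.1 p.2.1
  have hg : ∀ f, g (e f) = f.1 := fun f => Fin.cons_self_tail f.1
  exact Fintype.card_le_of_injective e fun f f' h => Subtype.ext (by rw [← hg, ← hg, h])

/-- A path with `m + 1` edges is, as far as the colours of its ends are concerned, a convex
combination of a path with one edge (`l = 0`) and a path with two edges (`l = 1`). The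
parameter satisfies the recursion `l ↦ 1 - l / q`. -/
lemma exists_wt (x : ℕ) (q : ℝ) (hq : 1 ≤ q) (hx : (x : ℝ) = q + 1) (m : ℕ) :
    ∃ l : ℝ, 0 ≤ l ∧ l ≤ 1 ∧ ∀ s t : Fin x,
      (Fintype.card (PathCol x s t m) : ℝ) ≤ q ^ m * wt q l s t := by
  classical
  have q0 : 0 < q := by linarith
  induction m with
  | zero =>
    refine ⟨0, le_rfl, zero_le_one, fun s t => ?_⟩
    unfold wt
    split_ifs with h
    · have : IsEmpty (PathCol x s t 0) := ⟨fun f => f.2.1 rfl h⟩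
      simp
    · have : Subsingleton (PathCol x s t 0) := inferInstance
      have := Fintype.card_le_one_iff_subsingleton.2 this
      simpa using this
  | succ m ih =>
    obtain ⟨l, l0, l1, h⟩ := ih
    have hl : l / q ≤ 1 := by rw [div_le_one q0]; linarith
    refine ⟨1 - l / q, by linarith, by linarith [div_nonneg l0 q0.le], fun s t => ?_⟩
    have h1 : (Fintype.card (PathCol x s t (m + 1)) : ℝ) ≤
        ∑ r : Fin x, if s = r then 0 else q ^ m * wt q l r t := by
      refine le_trans (Nat.cast_le.2 (card_step x s t m)) ?_
      push_cast
      refine Finset.sum_le_sum fun r _ => ?_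
      split_ifs
      · simp
      · exact h r t
    refine h1.trans (le_of_eq ?_)
    -- Rewriting the summand with indicators lets the sum over `r` be evaluated termwise.
    have h2 : ∀ r : Fin x, (if s = r then 0 else q ^ m * wt q l r t) =
        q ^ m * ((1 - l / q) + (if r = t then l - (1 - l / q) else 0)
          - (if s = r then wt q l s t else 0)) := by
      intro r
      unfold wt
      split_ifs <;> subst_vars <;> first | ring1 | simp_all
    simp only [h2]
    rw [← Finset.mul_sum, Finset.sum_sub_distrib, Finset.sum_add_distrib]
    simp only [Finset.sum_const, Finset.sum_ite_eq, Finset.sum_ite_eq', Finset.mem_univ, if_true,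
      Finset.card_univ, Fintype.card_fin, nsmul_eq_mul, hx]
    unfold wt
    split_ifs <;> field_simp <;> ring

/-! ### The contribution of one spoke -/

/-- The total weight, over the colour of a spoke, of the three paths joining it to hubs coloured
`s`, `t`, `r`. -/
noncomputable def spoke {x : ℕ} (q l m n : ℝ) (s t r : Fin x) : ℝ :=
  ∑ v : Fin x, wt q l s v * wt q m t v * wt q n r v

/-- Upper bound for `spoke` according to the equality pattern of the three hub colours; see
`spoke_le`. -/
noncomputable def bd {x : ℕ} (q : ℝ) (s t r : Fin x) : ℝ :=
  if s = t then (if s = r then q else (q ^ 2 - q + 1) / q)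
  else if s = r then (q ^ 2 - q + 1) / q
  else if t = r then (q ^ 2 - q + 1) / q
  else (q - 1) * (q ^ 2 - q + 2) / q ^ 2

lemma affine_le {f : ℝ → ℝ} {K l : ℝ} (hf : f l = (1 - l) * f 0 + l * f 1) (l0 : 0 ≤ l)
    (l1 : l ≤ 1) (h0 : f 0 ≤ K) (h1 : f 1 ≤ K) : f l ≤ K := by
  rw [hf]
  nlinarith [mul_nonneg l0 (sub_nonneg.2 h1), mul_nonneg (sub_nonneg.2 l1) (sub_nonneg.2 h0)]

/-- A function on the unit cube that is affine in each variable is bounded by its values at the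
vertices. -/
lemma triaffine_le (f : ℝ → ℝ → ℝ → ℝ) {K l m n : ℝ}
    (h₁ : ∀ l m n, f l m n = (1 - l) * f 0 m n + l * f 1 m n)
    (h₂ : ∀ l m n, f l m n = (1 - m) * f l 0 n + m * f l 1 n)
    (h₃ : ∀ l m n, f l m n = (1 - n) * f l m 0 + n * f l m 1)
    (l0 : 0 ≤ l) (l1 : l ≤ 1) (m0 : 0 ≤ m) (m1 : m ≤ 1) (n0 : 0 ≤ n) (n1 : n ≤ 1)
    (h000 : f 0 0 0 ≤ K) (h001 : f 0 0 1 ≤ K) (h010 : f 0 1 0 ≤ K) (h011 : f 0 1 1 ≤ K)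
    (h100 : f 1 0 0 ≤ K) (h101 : f 1 0 1 ≤ K) (h110 : f 1 1 0 ≤ K) (h111 : f 1 1 1 ≤ K) :
    f l m n ≤ K :=
  affine_le (f := fun l => f l m n) (h₁ l m n) l0 l1
    (affine_le (f := fun m => f 0 m n) (h₂ 0 m n) m0 m1
      (affine_le (h₃ 0 0 n) n0 n1 h000 h001) (affine_le (h₃ 0 1 n) n0 n1 h010 h011))
    (affine_le (f := fun m => f 1 m n) (h₂ 1 m n) m0 m1
      (affine_le (h₃ 1 0 n) n0 n1 h100 h101) (affine_le (h₃ 1 1 n) n0 n1 h110 h111))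

lemma bound_two {q l m n : ℝ} (hq : 3 ≤ q) (l0 : 0 ≤ l) (l1 : l ≤ 1) (m0 : 0 ≤ m) (m1 : m ≤ 1)
    (n0 : 0 ≤ n) (n1 : n ≤ 1) :
    l * m * (1 - n / q) + (1 - l / q) * (1 - m / q) * n +
      (q - 1) * ((1 - l / q) * (1 - m / q) * (1 - n / q)) ≤ (q ^ 2 - q + 1) / q := by
  obtain ⟨k, rfl⟩ : ∃ k, q = k + 3 := ⟨q - 3, by ring⟩
  have hk : 0 ≤ k := by linarith
  have k0 : k + 3 ≠ 0 := by positivity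
  refine triaffine_le (fun l m n => l * m * (1 - n / (k + 3)) + (1 - l / (k + 3)) * (1 - m / (k + 3)) * n +
      (k + 3 - 1) * ((1 - l / (k + 3)) * (1 - m / (k + 3)) * (1 - n / (k + 3))))
    (by intros; ring) (by intros; ring) (by intros; ring) l0 l1 m0 m1 n0 n1
    ?_ ?_ ?_ ?_ ?_ ?_ ?_ ?_ <;>
  · rw [← sub_nonneg]
    field_simp
    ring_nf
    positivity

lemma bound_distinct {q l m n : ℝ} (hq : 3 ≤ q) (l0 : 0 ≤ l) (l1 : l ≤ 1) (m0 : 0 ≤ m)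
    (m1 : m ≤ 1) (n0 : 0 ≤ n) (n1 : n ≤ 1) :
    l * (1 - m / q) * (1 - n / q) + (1 - l / q) * m * (1 - n / q) +
      (1 - l / q) * (1 - m / q) * n +
      (q - 2) * ((1 - l / q) * (1 - m / q) * (1 - n / q)) ≤
      (q - 1) * (q ^ 2 - q + 2) / q ^ 2 := by
  obtain ⟨k, rfl⟩ : ∃ k, q = k + 3 := ⟨q - 3, by ring⟩
  have hk : 0 ≤ k := by linarith
  have k0 : k + 3 ≠ 0 := by positivity
  refine triaffine_le (fun l m n => l * (1 - m / (k + 3)) * (1 - n / (k + 3)) +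
      (1 - l / (k + 3)) * m * (1 - n / (k + 3)) + (1 - l / (k + 3)) * (1 - m / (k + 3)) * n +
      (k + 3 - 2) * ((1 - l / (k + 3)) * (1 - m / (k + 3)) * (1 - n / (k + 3))))
    (by intros; ring) (by intros; ring) (by intros; ring) l0 l1 m0 m1 n0 n1
    ?_ ?_ ?_ ?_ ?_ ?_ ?_ ?_ <;>
  · rw [← sub_nonneg]
    field_simp
    ring_nf
    positivity

lemma bound_equal {q l m n : ℝ} (hq : 3 ≤ q) (l0 : 0 ≤ l) (l1 : l ≤ 1) (m0 : 0 ≤ m)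
    (m1 : m ≤ 1) (n0 : 0 ≤ n) (n1 : n ≤ 1) :
    l * m * n + q * ((1 - l / q) * (1 - m / q) * (1 - n / q)) ≤ q := by
  obtain ⟨k, rfl⟩ : ∃ k, q = k + 3 := ⟨q - 3, by ring⟩
  have hk : 0 ≤ k := by linarith
  have k0 : k + 3 ≠ 0 := by positivity
  refine triaffine_le (fun l m n => l * m * n + (k + 3) * ((1 - l / (k + 3)) * (1 - m / (k + 3)) * (1 - n / (k + 3))))
    (by intros; ring) (by intros; ring) (by intros; ring) l0 l1 m0 m1 n0 n1
    ?_ ?_ ?_ ?_ ?_ ?_ ?_ ?_ <;>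
  · rw [← sub_nonneg]
    field_simp
    ring_nf
    positivity

lemma spoke_two {x : ℕ} {q l m n : ℝ} (hq : 3 ≤ q) (hx : (x : ℝ) = q + 1) (l0 : 0 ≤ l)
    (l1 : l ≤ 1) (m0 : 0 ≤ m) (m1 : m ≤ 1) (n0 : 0 ≤ n) (n1 : n ≤ 1) {s r : Fin x}
    (h : s ≠ r) : spoke q l m n s s r ≤ (q ^ 2 - q + 1) / q := by
  refine le_trans (le_of_eq ?_) (bound_two hq l0 l1 m0 m1 n0 n1)
  have key : ∀ v : Fin x, wt q l s v * wt q m s v * wt q n r v =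
      (1 - l / q) * (1 - m / q) * (1 - n / q)
      + (if s = v then l * m * (1 - n / q) - (1 - l / q) * (1 - m / q) * (1 - n / q) else 0)
      + (if r = v then (1 - l / q) * (1 - m / q) * n
          - (1 - l / q) * (1 - m / q) * (1 - n / q) else 0) := by
    intro v
    unfold wt
    split_ifs <;> first | ring1 | simp_all
  simp only [spoke, key, Finset.sum_add_distrib, Finset.sum_const, Finset.sum_ite_eq,
    Finset.mem_univ, if_true, Finset.card_univ, Fintype.card_fin, nsmul_eq_mul, hx]
  ring

lemma spoke_le {x : ℕ} {q l m n : ℝ} (hq : 3 ≤ q) (hx : (x : ℝ) = q + 1) (l0 : 0 ≤ l)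
    (l1 : l ≤ 1) (m0 : 0 ≤ m) (m1 : m ≤ 1) (n0 : 0 ≤ n) (n1 : n ≤ 1) (s t r : Fin x) :
    spoke q l m n s t r ≤ bd q s t r := by
  unfold bd
  split_ifs with h1 h2 h2 h3
  · subst h1 h2
    refine le_trans (le_of_eq ?_) (bound_equal hq l0 l1 m0 m1 n0 n1)
    have key : ∀ v : Fin x, wt q l s v * wt q m s v * wt q n s v =
        (1 - l / q) * (1 - m / q) * (1 - n / q)
        + (if s = v then l * m * n - (1 - l / q) * (1 - m / q) * (1 - n / q) else 0) := by
      intro v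
      unfold wt
      split_ifs <;> ring
    simp only [spoke, key, Finset.sum_add_distrib, Finset.sum_const, Finset.sum_ite_eq,
      Finset.mem_univ, if_true, Finset.card_univ, Fintype.card_fin, nsmul_eq_mul, hx]
    ring
  · subst h1
    exact spoke_two hq hx l0 l1 m0 m1 n0 n1 h2
  · subst h2
    refine le_trans (le_of_eq ?_) (spoke_two hq hx l0 l1 n0 n1 m0 m1 h1)
    exact Finset.sum_congr rfl fun v _ => by ring
  · subst h3
    refine le_trans (le_of_eq ?_) (spoke_two hq hx m0 m1 n0 n1 l0 l1 (Ne.symm h1))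
    exact Finset.sum_congr rfl fun v _ => by ring
  · refine le_trans (le_of_eq ?_) (bound_distinct hq l0 l1 m0 m1 n0 n1)
    have key : ∀ v : Fin x, wt q l s v * wt q m t v * wt q n r v =
        (1 - l / q) * (1 - m / q) * (1 - n / q)
        + (if s = v then l * (1 - m / q) * (1 - n / q)
            - (1 - l / q) * (1 - m / q) * (1 - n / q) else 0)
        + (if t = v then (1 - l / q) * m * (1 - n / q)
            - (1 - l / q) * (1 - m / q) * (1 - n / q) else 0)
        + (if r = v then (1 - l / q) * (1 - m / q) * n
            - (1 - l / q) * (1 - m / q) * (1 - n / q) else 0) := by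
      intro v
      unfold wt
      split_ifs <;> first | ring1 | simp_all
    simp only [spoke, key, Finset.sum_add_distrib, Finset.sum_const, Finset.sum_ite_eq,
      Finset.mem_univ, if_true, Finset.card_univ, Fintype.card_fin, nsmul_eq_mul, hx]
    ring

/-! ### The inequality in `q` -/

lemma sum_bd {x : ℕ} {q : ℝ} (hx : (x : ℝ) = q + 1) :
    ∑ s : Fin x, ∑ t : Fin x, ∑ r : Fin x, bd q s t r ^ 10 =
      (q + 1) * (q * (q - 1) * ((q - 1) * (q ^ 2 - q + 2) / q ^ 2) ^ 10 +
        3 * q * ((q ^ 2 - q + 1) / q) ^ 10 + q ^ 10) := by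
  generalize hD : ((q - 1) * (q ^ 2 - q + 2) / q ^ 2) ^ 10 = D
  generalize hT : ((q ^ 2 - q + 1) / q) ^ 10 = T
  -- Inclusion-exclusion over the coincidences among `s`, `t`, `r`.
  have key : ∀ s t r : Fin x, bd q s t r ^ 10 = D + (if t = s then T - D else 0)
      + (if r = s then T - D else 0) + (if r = t then T - D else 0)
      + (if r = s then (if t = s then q ^ 10 - 3 * T + 2 * D else 0) else 0) := by
    intro s t r
    unfold bd
    rw [← hD, ← hT]
    clear hD hT
    split_ifs <;> first | ring1 | (exfalso; grind)
  simp only [key, Finset.sum_add_distrib, Finset.sum_const, Finset.sum_ite_eq', mul_ite, mul_zero,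
      Finset.mem_univ, if_true, Finset.card_univ, Fintype.card_fin, nsmul_eq_mul, hx]
  ring

lemma final_ineq {q : ℝ} (hq : 3 ≤ q) :
    q * (q - 1) * ((q - 1) * (q ^ 2 - q + 2) / q ^ 2) ^ 10 +
        3 * q * ((q ^ 2 - q + 1) / q) ^ 10 + q ^ 10 < q ^ 10 * ((q - 1) * (q - 2)) := by
  obtain ⟨k, rfl⟩ : ∃ k, q = k + 3 := ⟨q - 3, by ring⟩
  have hk : 0 ≤ k := by linarith
  have k0 : k + 3 ≠ 0 := by positivity
  rw [← sub_pos]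
  field_simp
  ring_nf
  positivity

/-! ### Splitting a colouring of the whole graph -/

lemma path_of_proper {V : Type} {x : ℕ} {G : SimpleGraph V} {f : V → Fin x}
    (hf : ∀ ⦃u v : V⦄, G.Adj u v → f u ≠ f v) {m : ℕ} {u w : V} {p : Fin m → V}
    (h0 : m = 0 → G.Adj u w) (h1 : ∀ j : Fin m, (j : ℕ) = 0 → G.Adj u (p j))
    (h2 : ∀ j : Fin m, (j : ℕ) + 1 = m → G.Adj w (p j))
    (h3 : ∀ j j' : Fin m, (j' : ℕ) = j + 1 → G.Adj (p j) (p j')) :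
    IsPath (f u) (f w) m (fun j => f (p j)) :=
  ⟨fun h => hf (h0 h), fun j h => hf (h1 j h), fun j h => hf (h2 j h),
    fun j j' h => hf (h3 j j' h)⟩

/-- A proper colouring is determined by the colours of the hubs and of the spokes, together with
the induced colourings of the interiors of the paths. -/
lemma chromPoly_le (k : ℕ) (a b c : Fin k → ℕ)
    (ha : ∀ i, 1 ≤ a i) (hb : ∀ i, 1 ≤ b i) (hc : ∀ i, 1 ≤ c i) (x : ℕ) :
    chromPoly (k3tGraph k a b c) x ≤
      ∑ s : Fin x, ∑ t : Fin x, ∑ r : Fin x, ∏ i : Fin k, ∑ v : Fin x,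
        Fintype.card (PathCol x s v (a i - 1)) * Fintype.card (PathCol x t v (b i - 1)) *
          Fintype.card (PathCol x r v (c i - 1)) := by
  classical
  let T : Type := Σ s : Fin x, Σ t : Fin x, Σ r : Fin x, Σ v : Fin k → Fin x,
    ∀ i : Fin k, (PathCol x s (v i) (a i - 1) × PathCol x t (v i) (b i - 1)) ×
      PathCol x r (v i) (c i - 1)
  have hT : Nat.card T = ∑ s : Fin x, ∑ t : Fin x, ∑ r : Fin x, ∏ i : Fin k, ∑ v : Fin x,
        Fintype.card (PathCol x s v (a i - 1)) * Fintype.card (PathCol x t v (b i - 1)) *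
          Fintype.card (PathCol x r v (c i - 1)) := by
    simp only [T, Nat.card_eq_fintype_card, Fintype.card_sigma, Fintype.card_pi,
      Fintype.card_prod, Finset.prod_univ_sum, Fintype.piFinset_univ]
  rw [← hT]
  let e : {f : _ → Fin x // ∀ ⦃u v⦄, (k3tGraph k a b c).Adj u v → f u ≠ f v} → T := fun f =>
    ⟨f.1 (.inl 0), f.1 (.inl 1), f.1 (.inl 2), fun i => f.1 (.inr (.inl i)), fun i =>
      ⟨⟨⟨fun j => f.1 (.inr (.inr ⟨i, .inl j⟩)), by
        have := ha i
        apply path_of_proper f.2 <;> intros <;>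
          simp only [k3tGraph, SimpleGraph.fromRel_adj, k3tRel] <;>
          refine ⟨by simp [Fin.ext_iff] <;> omega, ?_⟩ <;> simp <;> omega⟩,
      ⟨fun j => f.1 (.inr (.inr ⟨i, .inr (.inl j)⟩)), by
        have := hb i
        apply path_of_proper f.2 <;> intros <;>
          simp only [k3tGraph, SimpleGraph.fromRel_adj, k3tRel] <;>
          refine ⟨by simp [Fin.ext_iff] <;> omega, ?_⟩ <;> simp <;> omega⟩⟩,
      ⟨fun j => f.1 (.inr (.inr ⟨i, .inr (.inr j)⟩)), by
        have := hc i
        apply path_of_proper f.2 <;> intros <;>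
          simp only [k3tGraph, SimpleGraph.fromRel_adj, k3tRel] <;>
          refine ⟨by simp [Fin.ext_iff] <;> omega, ?_⟩ <;> simp <;> omega⟩⟩⟩
  let g : T → (Fin 3 ⊕ Fin k ⊕ (Σ i : Fin k, (Fin (a i - 1) ⊕ Fin (b i - 1) ⊕ Fin (c i - 1))))
      → Fin x := fun p w => match w with
    | .inl i => ![p.1, p.2.1, p.2.2.1] i
    | .inr (.inl i) => p.2.2.2.1 i
    | .inr (.inr ⟨i, .inl j⟩) => (p.2.2.2.2 i).1.1.1 j
    | .inr (.inr ⟨i, .inr (.inl j)⟩) => (p.2.2.2.2 i).1.2.1 j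
    | .inr (.inr ⟨i, .inr (.inr j)⟩) => (p.2.2.2.2 i).2.1 j
  -- `g` reassembles a colouring from its pieces, so `e` is injective.
  have hg : ∀ f, g (e f) = f.1 := by
    intro f
    funext w
    match w with
    | .inl i => fin_cases i <;> rfl
    | .inr (.inl i) => rfl
    | .inr (.inr ⟨i, .inl j⟩) => rfl
    | .inr (.inr ⟨i, .inr (.inl j)⟩) => rfl
    | .inr (.inr ⟨i, .inr (.inr j)⟩) => rfl
  exact Nat.card_le_card_of_injective e fun f f' h => Subtype.ext (by rw [← hg, ← hg, h])

lemma spoke_card_le {x : ℕ} {q : ℝ} (hq : 3 ≤ q) (hx : (x : ℝ) = q + 1) (l m n : ℕ)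
    (s t r : Fin x) :
    ∑ v : Fin x, (Fintype.card (PathCol x s v l) : ℝ) * Fintype.card (PathCol x t v m) *
      Fintype.card (PathCol x r v n) ≤ q ^ (l + m + n) * bd q s t r := by
  obtain ⟨α, α0, α1, hα⟩ := exists_wt x q (by linarith) hx l
  obtain ⟨β, β0, β1, hβ⟩ := exists_wt x q (by linarith) hx m
  obtain ⟨γ, γ0, γ1, hγ⟩ := exists_wt x q (by linarith) hx n
  refine le_trans ?_ (mul_le_mul_of_nonneg_left
    (spoke_le hq hx α0 α1 β0 β1 γ0 γ1 s t r) (by positivity))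
  rw [spoke, Finset.mul_sum]
  refine Finset.sum_le_sum fun v _ => ?_
  have hα' := (Nat.cast_nonneg _).trans (hα s v)
  have hβ' := (Nat.cast_nonneg _).trans (hβ t v)
  calc _ ≤ (q ^ l * wt q α s v) * (q ^ m * wt q β t v) * (q ^ n * wt q γ r v) :=
        mul_le_mul (mul_le_mul (hα s v) (hβ t v) (by positivity) hα') (hγ r v) (by positivity)
          (mul_nonneg hα' hβ')
    _ = _ := by ring

lemma chromPoly_real_le (k : ℕ) (a b c : Fin k → ℕ) (ha : ∀ i, 1 ≤ a i) (hb : ∀ i, 1 ≤ b i)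
    (hc : ∀ i, 1 ≤ c i) {x : ℕ} {q : ℝ} (hq : 3 ≤ q) (hx : (x : ℝ) = q + 1) :
    (chromPoly (k3tGraph k a b c) x : ℝ) ≤ ∑ s : Fin x, ∑ t : Fin x, ∑ r : Fin x,
      q ^ (∑ i, ((a i - 1) + (b i - 1) + (c i - 1))) * bd q s t r ^ k := by
  refine (Nat.cast_le.2 (chromPoly_le k a b c ha hb hc x)).trans ?_
  push_cast
  refine Finset.sum_le_sum fun s _ => Finset.sum_le_sum fun t _ => Finset.sum_le_sum fun r _ => ?_
  calc _ ≤ ∏ i : Fin k, (q ^ ((a i - 1) + (b i - 1) + (c i - 1)) * bd q s t r) :=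
        Finset.prod_le_prod
          (fun i _ => Finset.sum_nonneg fun v _ =>
            mul_nonneg (mul_nonneg (Nat.cast_nonneg _) (Nat.cast_nonneg _)) (Nat.cast_nonneg _))
          fun i _ => spoke_card_le hq hx (a i - 1) (b i - 1) (c i - 1) s t r
    _ = _ := by
        rw [Finset.prod_mul_distrib, Finset.prod_pow_eq_pow_sum, Finset.prod_const,
          Finset.card_univ, Fintype.card_fin]

end K3t

/-- **Lemma 3.2.** Let `G` be the subdivision of `K_{3,10}` determined by positive path
sizes `a i`, `b i`, `c i` (`i : Fin 10`), so that `G` has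
`n = (∑ i, (a i + b i + c i)) - 17` vertices.  Then for every natural number `x ≥ 4`,
`π(G,x) < (x)↓4 · (x-1)^(n-4)`. -/
theorem statement_3 (a b c : Fin 10 → ℕ)
    (ha : ∀ i, 1 ≤ a i) (hb : ∀ i, 1 ≤ b i) (hc : ∀ i, 1 ≤ c i)
    (n : ℕ) (hn : n = (∑ i, (a i + b i + c i)) - 17)
    (x : ℕ) (hx : 4 ≤ x) :
    chromPoly (k3tGraph 10 a b c) x < x * (x-1) * (x-2) * (x-3) * (x-1) ^ (n - 4) := by
  obtain ⟨y, rfl⟩ : ∃ y, x = y + 4 := ⟨x - 4, by omega⟩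
  -- `S` is the total number of internal vertices of the thirty paths.
  set S := ∑ i, ((a i - 1) + (b i - 1) + (c i - 1)) with hS
  have hsum : ∑ i, (a i + b i + c i) = S + 30 := by
    have : ∀ i, a i + b i + c i = ((a i - 1) + (b i - 1) + (c i - 1)) + 3 := fun i => by
      have := ha i; have := hb i; have := hc i; omega
    rw [Finset.sum_congr rfl fun i _ => this i, Finset.sum_add_distrib]
    simp [hS]
  have hn4 : n - 4 = S + 9 := by omega
  rw [hn4, ← Nat.cast_lt (α := ℝ)]
  have e1 : y + 4 - 1 = y + 3 := rfl
  have e2 : y + 4 - 2 = y + 2 := rfl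
  have e3 : y + 4 - 3 = y + 1 := rfl
  rw [e1, e2, e3]
  obtain ⟨q, hq⟩ : ∃ q : ℝ, q = y + 3 := ⟨_, rfl⟩
  have hy : (y : ℝ) = q - 3 := by linarith
  have q3 : 3 ≤ q := by rw [hq]; linarith [Nat.cast_nonneg (α := ℝ) y]
  have hxq : ((y + 4 : ℕ) : ℝ) = q + 1 := by push_cast; linarith
  have hqS : 0 < q ^ S := by positivity
  calc (chromPoly (k3tGraph 10 a b c) (y + 4) : ℝ)
      ≤ ∑ s : Fin (y + 4), ∑ t : Fin (y + 4), ∑ r : Fin (y + 4), q ^ S * K3t.bd q s t r ^ 10 := by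
        simpa only [Fintype.card_fin] using K3t.chromPoly_real_le 10 a b c ha hb hc q3 hxq
    _ = q ^ S * ((q + 1) * (q * (q - 1) * ((q - 1) * (q ^ 2 - q + 2) / q ^ 2) ^ 10 +
        3 * q * ((q ^ 2 - q + 1) / q) ^ 10 + q ^ 10)) := by
        simp only [← Finset.mul_sum]
        rw [K3t.sum_bd hxq]
    _ < q ^ S * ((q + 1) * (q ^ 10 * ((q - 1) * (q - 2)))) := by
        exact mul_lt_mul_of_pos_left
          (mul_lt_mul_of_pos_left (K3t.final_ineq q3) (by linarith)) hqS
    _ = ((y + 4) * (y + 3) * (y + 2) * (y + 1) * (y + 3) ^ (S + 9) : ℕ) := by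
        push_cast
        rw [hy]
        ring
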